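/- Let Ĝ be the result of eliminating the function symbol f from the EUF formula G by the nested-ITE construction with fresh domain variables vf_1,...,vf_n. Any interpretation J of the symbols occurring in G can be extended to an interpretation Ĵ of the symbols occurring in both G and Ĝ such that for every subexpression E of G, Ĵ[Ê] = Ĵ[E] = J[E]. -/

import Mathlib

mutual
inductive EufTerm (Fn Pr : Type) : Type
  | app : Fn → List (EufTerm Fn Pr) → EufTerm Fn Pr
  | ite : EufFormula Fn Pr → EufTerm Fn Pr → EufTerm Fn Pr → EufTerm Fn Pr
inductive EufFormula (Fn Pr : Type) : Type
  | tt : EufFormula Fn Pr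
  | ff : EufFormula Fn Pr
  | not : EufFormula Fn Pr → EufFormula Fn Pr
  | and : EufFormula Fn Pr → EufFormula Fn Pr → EufFormula Fn Pr
  | or : EufFormula Fn Pr → EufFormula Fn Pr → EufFormula Fn Pr
  | eq : EufTerm Fn Pr → EufTerm Fn Pr → EufFormula Fn Pr
  | papp : Pr → List (EufTerm Fn Pr) → EufFormula Fn Pr
end

structure Interp (Fn Pr : Type) (D : Type u) where
  fn : Fn → List D → D
  pr : Pr → List D → Bool

open Classical in
mutual
noncomputable def evalT {Fn Pr : Type} {D : Type} (I : Interp Fn Pr D) : EufTerm Fn Pr → D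
  | .app f args => I.fn f (args.attach.map (fun t => evalT I t.1))
  | .ite G T1 T2 => if evalF I G then evalT I T1 else evalT I T2
termination_by t => sizeOf t
decreasing_by
  all_goals simp_wf
  all_goals try omega
  all_goals (have := List.sizeOf_lt_of_mem t.2; omega)
noncomputable def evalF {Fn Pr : Type} {D : Type} (I : Interp Fn Pr D) : EufFormula Fn Pr → Bool
  | .tt => true
  | .ff => false
  | .not G => !evalF I G
  | .and G1 G2 => evalF I G1 && evalF I G2
  | .or G1 G2 => evalF I G1 || evalF I G2
  | .eq T1 T2 => decide (evalT I T1 = evalT I T2)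
  | .papp p args => I.pr p (args.attach.map (fun t => evalT I t.1))
termination_by g => sizeOf g
decreasing_by
  all_goals simp_wf
  all_goals try omega
  all_goals (have := List.sizeOf_lt_of_mem t.2; omega)
end
def ValidOn {Fn Pr : Type} (F : EufFormula Fn Pr) (D : Type) : Prop :=
  ∀ I : Interp Fn Pr D, evalF I F = true

def UniversallyValid {Fn Pr : Type} (F : EufFormula Fn Pr) : Prop :=
  ∀ D : Type, Nonempty D → ValidOn F D

/-- Expressions: terms or formulas. -/
inductive EufExpr (Fn Pr : Type) : Type
  | t : EufTerm Fn Pr → EufExpr Fn Pr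
  | f : EufFormula Fn Pr → EufExpr Fn Pr

/-- Immediate (proper) subexpression relation. -/
inductive ImmSub {Fn Pr : Type} : EufExpr Fn Pr → EufExpr Fn Pr → Prop
  | appArg {g : Fn} {args : List (EufTerm Fn Pr)} {T : EufTerm Fn Pr} :
      T ∈ args → ImmSub (.t T) (.t (.app g args))
  | iteC {G : EufFormula Fn Pr} {T1 T2 : EufTerm Fn Pr} : ImmSub (.f G) (.t (.ite G T1 T2))
  | ite1 {G : EufFormula Fn Pr} {T1 T2 : EufTerm Fn Pr} : ImmSub (.t T1) (.t (.ite G T1 T2))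
  | ite2 {G : EufFormula Fn Pr} {T1 T2 : EufTerm Fn Pr} : ImmSub (.t T2) (.t (.ite G T1 T2))
  | not {G : EufFormula Fn Pr} : ImmSub (.f G) (.f (.not G))
  | andL {G1 G2 : EufFormula Fn Pr} : ImmSub (.f G1) (.f (.and G1 G2))
  | andR {G1 G2 : EufFormula Fn Pr} : ImmSub (.f G2) (.f (.and G1 G2))
  | orL {G1 G2 : EufFormula Fn Pr} : ImmSub (.f G1) (.f (.or G1 G2))
  | orR {G1 G2 : EufFormula Fn Pr} : ImmSub (.f G2) (.f (.or G1 G2))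
  | eqL {T1 T2 : EufTerm Fn Pr} : ImmSub (.t T1) (.f (.eq T1 T2))
  | eqR {T1 T2 : EufTerm Fn Pr} : ImmSub (.t T2) (.f (.eq T1 T2))
  | pappArg {p : Pr} {args : List (EufTerm Fn Pr)} {T : EufTerm Fn Pr} :
      T ∈ args → ImmSub (.t T) (.f (.papp p args))

/-- `SubExpr a b`: `a` occurs (as a subexpression) in `b`. -/
def SubExpr {Fn Pr : Type} (a b : EufExpr Fn Pr) : Prop := Relation.ReflTransGen ImmSub a b

def TermInT {Fn Pr : Type} (T S : EufTerm Fn Pr) : Prop := SubExpr (.t T) (.t S)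
def TermInF {Fn Pr : Type} (T : EufTerm Fn Pr) (F : EufFormula Fn Pr) : Prop :=
  SubExpr (.t T) (.f F)
def FormulaInT {Fn Pr : Type} (G : EufFormula Fn Pr) (S : EufTerm Fn Pr) : Prop :=
  SubExpr (.f G) (.t S)
def FormulaInF {Fn Pr : Type} (G F : EufFormula Fn Pr) : Prop := SubExpr (.f G) (.f F)

def IsAppTerm {Fn Pr : Type} : EufTerm Fn Pr → Prop
  | .app _ _ => True
  | _ => False

/-- `𝒯(F)`: the function application terms occurring in `F`. -/
def AppTermsF {Fn Pr : Type} (F : EufFormula Fn Pr) : Set (EufTerm Fn Pr) :=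
  {T | IsAppTerm T ∧ TermInF T F}

/-- A function symbol occurs in `F` when some application of it occurs in `F`. -/
def FnInF {Fn Pr : Type} (g : Fn) (F : EufFormula Fn Pr) : Prop :=
  ∃ args, TermInF (EufTerm.app g args) F

def PrInF {Fn Pr : Type} (p : Pr) (F : EufFormula Fn Pr) : Prop :=
  ∃ args, FormulaInF (EufFormula.papp p args) F

/-- `I` is diverse for `F` with respect to the set `Sg` of function symbols. -/
def DiverseFor {Fn Pr D : Type} (I : Interp Fn Pr D) (F : EufFormula Fn Pr)
    (Sg : Set Fn) : Prop :=
  ∀ (g : Fn) (args : List (EufTerm Fn Pr)), g ∈ Sg →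
    TermInF (EufTerm.app g args) F →
    ∀ T2 ∈ AppTermsF F, evalT I (EufTerm.app g args) = evalT I T2 →
      ∃ args2, T2 = EufTerm.app g args2 ∧
        List.Forall₂ (fun a b => evalT I a = evalT I b) args args2

mutual
/-- PEUF g-terms, where `isP` designates the p-function symbols. -/
inductive IsGTerm {Fn Pr : Type} (isP : Fn → Prop) : EufTerm Fn Pr → Prop
  | ite {G : EufFormula Fn Pr} {T1 T2 : EufTerm Fn Pr} :
      IsGFormula isP G → IsGTerm isP T1 → IsGTerm isP T2 → IsGTerm isP (.ite G T1 T2)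
  | app {g : Fn} {args : List (EufTerm Fn Pr)} :
      ¬ isP g → (∀ T ∈ args, IsPTerm isP T) → IsGTerm isP (.app g args)
/-- PEUF p-terms. -/
inductive IsPTerm {Fn Pr : Type} (isP : Fn → Prop) : EufTerm Fn Pr → Prop
  | g {T : EufTerm Fn Pr} : IsGTerm isP T → IsPTerm isP T
  | ite {G : EufFormula Fn Pr} {T1 T2 : EufTerm Fn Pr} :
      IsGFormula isP G → IsPTerm isP T1 → IsPTerm isP T2 → IsPTerm isP (.ite G T1 T2)
  | app {g : Fn} {args : List (EufTerm Fn Pr)} :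
      isP g → (∀ T ∈ args, IsPTerm isP T) → IsPTerm isP (.app g args)
/-- PEUF g-formulas. -/
inductive IsGFormula {Fn Pr : Type} (isP : Fn → Prop) : EufFormula Fn Pr → Prop
  | tt : IsGFormula isP .tt
  | ff : IsGFormula isP .ff
  | not {G : EufFormula Fn Pr} : IsGFormula isP G → IsGFormula isP (.not G)
  | and {G1 G2 : EufFormula Fn Pr} :
      IsGFormula isP G1 → IsGFormula isP G2 → IsGFormula isP (.and G1 G2)
  | or {G1 G2 : EufFormula Fn Pr} :
      IsGFormula isP G1 → IsGFormula isP G2 → IsGFormula isP (.or G1 G2)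
  | eq {T1 T2 : EufTerm Fn Pr} :
      IsGTerm isP T1 → IsGTerm isP T2 → IsGFormula isP (.eq T1 T2)
  | papp {p : Pr} {args : List (EufTerm Fn Pr)} :
      (∀ T ∈ args, IsPTerm isP T) → IsGFormula isP (.papp p args)
/-- PEUF p-formulas. -/
inductive IsPFormula {Fn Pr : Type} (isP : Fn → Prop) : EufFormula Fn Pr → Prop
  | g {G : EufFormula Fn Pr} : IsGFormula isP G → IsPFormula isP G
  | and {G1 G2 : EufFormula Fn Pr} :
      IsPFormula isP G1 → IsPFormula isP G2 → IsPFormula isP (.and G1 G2)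
  | or {G1 G2 : EufFormula Fn Pr} :
      IsPFormula isP G1 → IsPFormula isP G2 → IsPFormula isP (.or G1 G2)
  | eq {T1 T2 : EufTerm Fn Pr} :
      IsPTerm isP T1 → IsPTerm isP T2 → IsPFormula isP (.eq T1 T2)
end

/-- The p-function symbols occurring in `F`. -/
def PSymbolsIn {Fn Pr : Type} (isP : Fn → Prop) (F : EufFormula Fn Pr) : Set Fn :=
  {g | isP g ∧ FnInF g F}

/-- `I` is maximally diverse for the p-formula `F`. -/
def MaxDiverse {Fn Pr D : Type} (isP : Fn → Prop) (I : Interp Fn Pr D)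
    (F : EufFormula Fn Pr) : Prop :=
  DiverseFor I F (PSymbolsIn isP F)

/-- `I'` refines `I` on the term set `Ts`. -/
def RefinesOn {Fn Pr D D' : Type} (I' : Interp Fn Pr D') (I : Interp Fn Pr D)
    (Ts : Set (EufTerm Fn Pr)) : Prop :=
  ∀ T1 ∈ Ts, ∀ T2 ∈ Ts, evalT I' T1 = evalT I' T2 → evalT I T1 = evalT I T2

def ProperRefinesOn {Fn Pr D D' : Type} (I' : Interp Fn Pr D') (I : Interp Fn Pr D)
    (Ts : Set (EufTerm Fn Pr)) : Prop :=
  RefinesOn I' I Ts ∧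
    ∃ T1 ∈ Ts, ∃ T2 ∈ Ts, evalT I T1 = evalT I T2 ∧ evalT I' T1 ≠ evalT I' T2
open Classical in
mutual
/-- Substitute the term `B` for each instance of the term `A`. -/
noncomputable def substT {Fn Pr : Type} (A B : EufTerm Fn Pr) : EufTerm Fn Pr → EufTerm Fn Pr
  | .app g args =>
      if EufTerm.app g args = A then B
      else .app g (args.attach.map (fun t => substT A B t.1))
  | .ite G T1 T2 =>
      if EufTerm.ite G T1 T2 = A then B
      else .ite (substF A B G) (substT A B T1) (substT A B T2)
termination_by t => sizeOf t
decreasing_by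
  all_goals simp_wf
  all_goals try omega
  all_goals (have := List.sizeOf_lt_of_mem t.2; omega)
noncomputable def substF {Fn Pr : Type} (A B : EufTerm Fn Pr) : EufFormula Fn Pr → EufFormula Fn Pr
  | .tt => .tt
  | .ff => .ff
  | .not G => .not (substF A B G)
  | .and G1 G2 => .and (substF A B G1) (substF A B G2)
  | .or G1 G2 => .or (substF A B G1) (substF A B G2)
  | .eq T1 T2 => .eq (substT A B T1) (substT A B T2)
  | .papp p args => .papp p (args.attach.map (fun t => substT A B t.1))
termination_by g => sizeOf g
decreasing_by
  all_goals simp_wf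
  all_goals try omega
  all_goals (have := List.sizeOf_lt_of_mem t.2; omega)
end

open Classical in
mutual
/-- Substitute the formula `B` for each instance of the formula `A` inside a term. -/
noncomputable def fsubstT {Fn Pr : Type} (A B : EufFormula Fn Pr) : EufTerm Fn Pr → EufTerm Fn Pr
  | .app g args => .app g (args.attach.map (fun t => fsubstT A B t.1))
  | .ite G T1 T2 => .ite (fsubstF A B G) (fsubstT A B T1) (fsubstT A B T2)
termination_by t => sizeOf t
decreasing_by
  all_goals simp_wf
  all_goals try omega
  all_goals (have := List.sizeOf_lt_of_mem t.2; omega)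
/-- Substitute the formula `B` for each instance of the formula `A`. -/
noncomputable def fsubstF {Fn Pr : Type} (A B : EufFormula Fn Pr) : EufFormula Fn Pr → EufFormula Fn Pr
  | .tt => if EufFormula.tt = A then B else .tt
  | .ff => if EufFormula.ff = A then B else .ff
  | .not G => if EufFormula.not G = A then B else .not (fsubstF A B G)
  | .and G1 G2 => if EufFormula.and G1 G2 = A then B else .and (fsubstF A B G1) (fsubstF A B G2)
  | .or G1 G2 => if EufFormula.or G1 G2 = A then B else .or (fsubstF A B G1) (fsubstF A B G2)
  | .eq T1 T2 => if EufFormula.eq T1 T2 = A then B else .eq (fsubstT A B T1) (fsubstT A B T2)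
  | .papp p args =>
      if EufFormula.papp p args = A then B
      else .papp p (args.attach.map (fun t => fsubstT A B t.1))
termination_by g => sizeOf g
decreasing_by
  all_goals simp_wf
  all_goals try omega
  all_goals (have := List.sizeOf_lt_of_mem t.2; omega)
end
/-- The formula `C_{i,j}`: conjunction of the equations between transformed arguments. -/
def Cform {Fn Pr : Type} (hatS : ℕ → ℕ → EufTerm Fn Pr) (k i j : ℕ) : EufFormula Fn Pr :=
  ((List.range' 1 k).map (fun l => EufFormula.eq (hatS i l) (hatS j l))).foldr .and .tt

/-- The nested-ITE term `V_{i,j}`. -/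
def Vterm {Fn Pr : Type} (vf : ℕ → Fn) (hatS : ℕ → ℕ → EufTerm Fn Pr) (k i : ℕ) :
    ℕ → EufTerm Fn Pr
  | j =>
    if h : j < i then
      .ite (Cform hatS k i j) (.app (vf j) []) (Vterm vf hatS k i (j+1))
    else .app (vf i) []
termination_by j => i - j
decreasing_by omega

/-- The nested-ITE term `U_i` replacing the i-th f-application. -/
def Uterm {Fn Pr : Type} (vf : ℕ → Fn) (hatS : ℕ → ℕ → EufTerm Fn Pr) (k i : ℕ) :
    EufTerm Fn Pr :=
  Vterm vf hatS k i 1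

/-- `stepT … i E = E⁽ⁱ⁾` for terms. -/
noncomputable def stepT {Fn Pr : Type} (Ts : ℕ → EufTerm Fn Pr) (vf : ℕ → Fn)
    (hatS : ℕ → ℕ → EufTerm Fn Pr) (k : ℕ) : ℕ → EufTerm Fn Pr → EufTerm Fn Pr
  | 0, E => E
  | i+1, E =>
      substT (stepT Ts vf hatS k i (Ts (i+1))) (Uterm vf hatS k (i+1)) (stepT Ts vf hatS k i E)

/-- `stepF … i E = E⁽ⁱ⁾` for formulas. -/
noncomputable def stepF {Fn Pr : Type} (Ts : ℕ → EufTerm Fn Pr) (vf : ℕ → Fn)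
    (hatS : ℕ → ℕ → EufTerm Fn Pr) (k : ℕ) : ℕ → EufFormula Fn Pr → EufFormula Fn Pr
  | 0, E => E
  | i+1, E =>
      substF (stepT Ts vf hatS k i (Ts (i+1))) (Uterm vf hatS k (i+1)) (stepF Ts vf hatS k i E)

/-- The f-order of a term: the largest index `i ∈ [1,n]` with `Ts i` occurring in `E`. -/
noncomputable def fordT {Fn Pr : Type} (n : ℕ) (Ts : ℕ → EufTerm Fn Pr)
    (E : EufTerm Fn Pr) : ℕ :=
  sSup {i | 1 ≤ i ∧ i ≤ n ∧ TermInT (Ts i) E}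

/-- The f-order of a formula. -/
noncomputable def fordF {Fn Pr : Type} (n : ℕ) (Ts : ℕ → EufTerm Fn Pr)
    (E : EufFormula Fn Pr) : ℕ :=
  sSup {i | 1 ≤ i ∧ i ≤ n ∧ TermInF (Ts i) E}

/-- `Ê` for terms: `E⁽ᵐ⁾` where `m` is the f-order of `E`. -/
noncomputable def hatT {Fn Pr : Type} (n : ℕ) (Ts : ℕ → EufTerm Fn Pr) (vf : ℕ → Fn)
    (hatS : ℕ → ℕ → EufTerm Fn Pr) (k : ℕ) (E : EufTerm Fn Pr) : EufTerm Fn Pr :=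
  stepT Ts vf hatS k (fordT n Ts E) E

/-- `Ê` for formulas. -/
noncomputable def hatF {Fn Pr : Type} (n : ℕ) (Ts : ℕ → EufTerm Fn Pr) (vf : ℕ → Fn)
    (hatS : ℕ → ℕ → EufTerm Fn Pr) (k : ℕ) (E : EufFormula Fn Pr) : EufFormula Fn Pr :=
  stepF Ts vf hatS k (fordF n Ts E) E

/-- Hypotheses of the nested-ITE elimination of the function symbol `f` from `G`:
`Ts 1, …, Ts n` are the syntactically distinct f-application terms of `G` (ordered so that
subterms precede superterms) with argument terms `S i 1, …, S i k`; the `vf i` are fresh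
domain variables; and `hatS i l` is the transformed argument term `Ŝ_{i,l}`. -/
structure ElimHyps {Fn Pr : Type} (G : EufFormula Fn Pr) (f : Fn) (k n : ℕ)
    (Ts : ℕ → EufTerm Fn Pr) (S : ℕ → ℕ → EufTerm Fn Pr) (vf : ℕ → Fn)
    (hatS : ℕ → ℕ → EufTerm Fn Pr) : Prop where
  k_pos : 1 ≤ k
  ts_app : ∀ i, 1 ≤ i → i ≤ n → Ts i = EufTerm.app f ((List.range' 1 k).map (S i))
  ts_occurs : ∀ i, 1 ≤ i → i ≤ n → TermInF (Ts i) G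
  ts_distinct : ∀ i j, 1 ≤ i → i ≤ n → 1 ≤ j → j ≤ n → Ts i = Ts j → i = j
  ts_complete : ∀ args, TermInF (EufTerm.app f args) G →
      ∃ i, 1 ≤ i ∧ i ≤ n ∧ EufTerm.app f args = Ts i
  ts_order : ∀ i j, 1 ≤ i → i ≤ n → 1 ≤ j → j ≤ n → TermInT (Ts i) (Ts j) → i ≠ j → i < j
  vf_fresh : ∀ i, 1 ≤ i → i ≤ n → ¬ FnInF (vf i) G
  vf_inj : ∀ i j, 1 ≤ i → i ≤ n → 1 ≤ j → j ≤ n → vf i = vf j → i = j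
  vf_ne_f : ∀ i, 1 ≤ i → i ≤ n → vf i ≠ f
  hatS_spec : ∀ j l, 1 ≤ j → j ≤ n → 1 ≤ l → l ≤ k →
      hatS j l = stepT Ts vf hatS k (fordT n Ts (S j l)) (S j l)

/-- `Ĝ = G⁽ⁿ⁾`: the result of eliminating `f` from `G`. -/
noncomputable def elimResult {Fn Pr : Type} (G : EufFormula Fn Pr) (n : ℕ)
    (Ts : ℕ → EufTerm Fn Pr) (vf : ℕ → Fn) (hatS : ℕ → ℕ → EufTerm Fn Pr) (k : ℕ) :
    EufFormula Fn Pr :=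
  stepF Ts vf hatS k n G


section helpers
variable {Fn Pr D : Type}

open Classical in
mutual
theorem evalT_subst (I : Interp Fn Pr D) (A B : EufTerm Fn Pr) (h : evalT I A = evalT I B) :
    ∀ T : EufTerm Fn Pr, evalT I (substT A B T) = evalT I T
  | .app g args => by
      rw [substT]
      split_ifs with hc
      · rw [hc, h]
      · rw [evalT, evalT]
        congr 1
        have : ∀ t ∈ args, evalT I (substT A B t) = evalT I t := fun t ht =>
          evalT_subst I A B h t
        simpa using this
  | .ite G T1 T2 => by
      rw [substT]
      split_ifs with hc
      · rw [hc, h]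
      · rw [evalT, evalT, evalF_subst I A B h G, evalT_subst I A B h T1, evalT_subst I A B h T2]
termination_by t => sizeOf t
decreasing_by
  all_goals simp_wf
  all_goals try omega
  all_goals (have := List.sizeOf_lt_of_mem ht; omega)
theorem evalF_subst (I : Interp Fn Pr D) (A B : EufTerm Fn Pr) (h : evalT I A = evalT I B) :
    ∀ F : EufFormula Fn Pr, evalF I (substF A B F) = evalF I F
  | .tt => by rw [substF]
  | .ff => by rw [substF]
  | .not G => by rw [substF, evalF, evalF, evalF_subst I A B h G]
  | .and G1 G2 => by
      rw [substF, evalF, evalF, evalF_subst I A B h G1, evalF_subst I A B h G2]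
  | .or G1 G2 => by
      rw [substF, evalF, evalF, evalF_subst I A B h G1, evalF_subst I A B h G2]
  | .eq T1 T2 => by
      rw [substF, evalF, evalF, evalT_subst I A B h T1, evalT_subst I A B h T2]
  | .papp p args => by
      rw [substF, evalF, evalF]
      congr 1
      have : ∀ t ∈ args, evalT I (substT A B t) = evalT I t := fun t ht =>
        evalT_subst I A B h t
      simpa using this
termination_by g => sizeOf g
decreasing_by
  all_goals simp_wf
  all_goals try omega
  all_goals (have := List.sizeOf_lt_of_mem ht; omega)
end

theorem sub_head {a b c : EufExpr Fn Pr} (h : ImmSub a b) (h2 : SubExpr b c) : SubExpr a c :=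
  Relation.ReflTransGen.head h h2

mutual
theorem evalT_agree (G : EufFormula Fn Pr) (I J : Interp Fn Pr D)
    (hf : ∀ g, FnInF g G → I.fn g = J.fn g) (hp : ∀ p, PrInF p G → I.pr p = J.pr p) :
    ∀ T : EufTerm Fn Pr, TermInF T G → evalT I T = evalT J T
  | .app g args, hT => by
      have : ∀ t ∈ args, evalT I t = evalT J t := fun t ht =>
        evalT_agree G I J hf hp t (sub_head (.appArg ht) hT)
      rw [evalT, evalT, hf g ⟨args, hT⟩]
      congr 1
      simpa using this
  | .ite F T1 T2, hT => by
      rw [evalT, evalT, evalF_agree G I J hf hp F (sub_head .iteC hT),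
        evalT_agree G I J hf hp T1 (sub_head .ite1 hT),
        evalT_agree G I J hf hp T2 (sub_head .ite2 hT)]
termination_by t => sizeOf t
decreasing_by
  all_goals simp_wf
  all_goals try omega
  all_goals (have := List.sizeOf_lt_of_mem ht; omega)
theorem evalF_agree (G : EufFormula Fn Pr) (I J : Interp Fn Pr D)
    (hf : ∀ g, FnInF g G → I.fn g = J.fn g) (hp : ∀ p, PrInF p G → I.pr p = J.pr p) :
    ∀ F : EufFormula Fn Pr, FormulaInF F G → evalF I F = evalF J F
  | .tt, _ => by rw [evalF, evalF]
  | .ff, _ => by rw [evalF, evalF]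
  | .not F, h => by rw [evalF, evalF, evalF_agree G I J hf hp F (sub_head .not h)]
  | .and F1 F2, h => by
      rw [evalF, evalF, evalF_agree G I J hf hp F1 (sub_head .andL h),
        evalF_agree G I J hf hp F2 (sub_head .andR h)]
  | .or F1 F2, h => by
      rw [evalF, evalF, evalF_agree G I J hf hp F1 (sub_head .orL h),
        evalF_agree G I J hf hp F2 (sub_head .orR h)]
  | .eq T1 T2, h => by
      rw [evalF, evalF, evalT_agree G I J hf hp T1 (sub_head .eqL h),
        evalT_agree G I J hf hp T2 (sub_head .eqR h)]
  | .papp p args, h => by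
      have : ∀ t ∈ args, evalT I t = evalT J t := fun t ht =>
        evalT_agree G I J hf hp t (sub_head (.pappArg ht) h)
      rw [evalF, evalF, hp p ⟨args, h⟩]
      congr 1
      simpa using this
termination_by g => sizeOf g
decreasing_by
  all_goals simp_wf
  all_goals try omega
  all_goals (have := List.sizeOf_lt_of_mem ht; omega)
end

noncomputable def exprSize : EufExpr Fn Pr → ℕ
  | .t T => sizeOf T
  | .f F => sizeOf F

theorem immSub_size {a b : EufExpr Fn Pr} (h : ImmSub a b) : exprSize a < exprSize b := by
  cases h <;> simp [exprSize] <;> try omega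
  all_goals (rename_i ht; have := List.sizeOf_lt_of_mem ht; omega)

theorem subExpr_size {a b : EufExpr Fn Pr} (h : SubExpr a b) : exprSize a ≤ exprSize b := by
  induction h with
  | refl => exact le_rfl
  | tail _ h2 ih => exact ih.trans (immSub_size h2).le

theorem evalT_app (I : Interp Fn Pr D) (g : Fn) (args : List (EufTerm Fn Pr)) :
    evalT I (.app g args) = I.fn g (args.map (evalT I)) := by
  rw [evalT]; congr 1; simp

theorem evalF_foldr (I : Interp Fn Pr D) (L : List (EufFormula Fn Pr)) :
    evalF I (L.foldr .and .tt) = true ↔ ∀ F ∈ L, evalF I F = true := by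
  induction L with
  | nil => simp [evalF]
  | cons a L ih => simp [evalF, ih]

theorem evalF_Cform (I : Interp Fn Pr D) (hatS : ℕ → ℕ → EufTerm Fn Pr) (k i j : ℕ) :
    evalF I (Cform hatS k i j) = true ↔
      ∀ l ∈ List.range' 1 k, evalT I (hatS i l) = evalT I (hatS j l) := by
  rw [Cform, evalF_foldr]
  constructor
  · intro h l hl
    have := h _ (List.mem_map_of_mem hl)
    simpa [evalF] using this
  · intro h F hF
    obtain ⟨l, hl, rfl⟩ := List.mem_map.1 hF
    simpa [evalF] using h l hl

theorem evalT_Vterm (I : Interp Fn Pr D) (vf : ℕ → Fn) (hatS : ℕ → ℕ → EufTerm Fn Pr) (k i : ℕ)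
    (d : D) (hi : I.fn (vf i) [] = d)
    (hj : ∀ j, 1 ≤ j → j < i → evalF I (Cform hatS k i j) = true → I.fn (vf j) [] = d) :
    ∀ m j, i - j ≤ m → 1 ≤ j → evalT I (Vterm vf hatS k i j) = d := by
  intro m
  induction m with
  | zero =>
    intro j h1 _
    rw [Vterm, dif_neg (by omega), evalT_app]
    exact hi
  | succ m ih =>
    intro j h1 h2
    rw [Vterm]
    split_ifs with h
    · rw [evalT, ih (j+1) (by omega) (by omega)]
      split_ifs with hc
      · rw [evalT_app]; exact hj j h2 h hc
      · rfl
    · rw [evalT_app]; exact hi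

theorem fordT_le (n m : ℕ) (Ts : ℕ → EufTerm Fn Pr) (E : EufTerm Fn Pr)
    (h : ∀ i, 1 ≤ i → i ≤ n → TermInT (Ts i) E → i ≤ m) : fordT n Ts E ≤ m := by
  unfold fordT
  rcases Set.eq_empty_or_nonempty {i | 1 ≤ i ∧ i ≤ n ∧ TermInT (Ts i) E} with h0 | h0
  · rw [h0]; simp
  · exact csSup_le h0 fun i hi => h i hi.1 hi.2.1 hi.2.2

theorem fordF_le (n : ℕ) (Ts : ℕ → EufTerm Fn Pr) (E : EufFormula Fn Pr) : fordF n Ts E ≤ n := by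
  unfold fordF
  rcases Set.eq_empty_or_nonempty {i | 1 ≤ i ∧ i ≤ n ∧ TermInF (Ts i) E} with h0 | h0
  · rw [h0]; simp
  · exact csSup_le h0 fun i hi => hi.2.1

theorem step_eval (G : EufFormula Fn Pr) (f : Fn)
    (k n : ℕ) (Ts : ℕ → EufTerm Fn Pr) (S : ℕ → ℕ → EufTerm Fn Pr) (vf : ℕ → Fn)
    (hatS : ℕ → ℕ → EufTerm Fn Pr) (he : ElimHyps G f k n Ts S vf hatS)
    (I : Interp Fn Pr D)
    (hv : ∀ i, 1 ≤ i → i ≤ n → I.fn (vf i) [] = evalT I (Ts i)) :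
    ∀ i, i ≤ n → (∀ T, evalT I (stepT Ts vf hatS k i T) = evalT I T) ∧
      (∀ F, evalF I (stepF Ts vf hatS k i F) = evalF I F) := by
  intro i
  induction i using Nat.strong_induction_on with
  | _ i ih =>
  intro hin
  rcases i with _ | i
  · exact ⟨fun T => by rw [stepT], fun F => by rw [stepF]⟩
  have hS : ∀ j, 1 ≤ j → j ≤ i + 1 → ∀ l ∈ List.range' 1 k,
      evalT I (hatS j l) = evalT I (S j l) := by
    intro j h1 h2 l hl
    have hl' : 1 ≤ l ∧ l ≤ k := by
      rw [List.mem_range'_1] at hl; omega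
    rw [he.hatS_spec j l h1 (by omega) hl'.1 hl'.2]
    have hlt : fordT n Ts (S j l) ≤ i := by
      apply fordT_le
      intro m hm1 hm2 hm
      have himm : ImmSub (.t (S j l)) (.t (Ts j)) := by
        rw [he.ts_app j h1 (by omega)]
        exact .appArg (List.mem_map_of_mem hl)
      have hne : m ≠ j := by
        rintro rfl
        have a := subExpr_size hm
        have b := immSub_size himm
        omega
      have := he.ts_order m j hm1 hm2 h1 (by omega) (Relation.ReflTransGen.tail hm himm) hne
      omega
    exact (ih _ (by omega) (by omega)).1 _
  have key : evalT I (stepT Ts vf hatS k i (Ts (i+1))) = evalT I (Uterm vf hatS k (i+1)) := by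
    rw [(ih i (by omega) (by omega)).1, Uterm]
    symm
    apply evalT_Vterm I vf hatS k (i+1) _ (hv _ (by omega) hin) _ (i+1) 1 (by omega) le_rfl
    intro j h1 h2 hc
    rw [hv j h1 (by omega), he.ts_app j h1 (by omega), he.ts_app (i+1) (by omega) hin,
      evalT_app, evalT_app]
    congr 1
    rw [List.map_map, List.map_map]
    apply List.map_congr_left
    intro l hl
    rw [evalF_Cform] at hc
    have := hc l hl
    rw [hS _ (by omega) le_rfl l hl, hS j h1 (by omega) l hl] at this
    exact this.symm
  constructor
  · intro T
    rw [stepT, evalT_subst I _ _ key, (ih i (by omega) (by omega)).1]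
  · intro F
    rw [stepF, evalF_subst I _ _ key, (ih i (by omega) (by omega)).2]

end helpers

/-- Any interpretation `J` of the symbols in `G` can be extended to an
interpretation `Ĵ` (of the symbols in both `G` and `Ĝ`) such that for every subexpression
`E` of `G`, `Ĵ[Ê] = Ĵ[E] = J[E]`. -/
theorem G_hG_lemma {Fn Pr D : Type} [Nonempty D] (G : EufFormula Fn Pr) (f : Fn)
    (k n : ℕ) (Ts : ℕ → EufTerm Fn Pr) (S : ℕ → ℕ → EufTerm Fn Pr) (vf : ℕ → Fn)
    (hatS : ℕ → ℕ → EufTerm Fn Pr) (he : ElimHyps G f k n Ts S vf hatS)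
    (J : Interp Fn Pr D) :
    ∃ Jh : Interp Fn Pr D,
      (∀ g : Fn, FnInF g G → Jh.fn g = J.fn g) ∧
      (∀ p : Pr, PrInF p G → Jh.pr p = J.pr p) ∧
      (∀ T : EufTerm Fn Pr, TermInF T G →
        evalT Jh (hatT n Ts vf hatS k T) = evalT Jh T ∧ evalT Jh T = evalT J T) ∧
      (∀ E : EufFormula Fn Pr, FormulaInF E G →
        evalF Jh (hatF n Ts vf hatS k E) = evalF Jh E ∧ evalF Jh E = evalF J E) := by
  classical
  let Jh : Interp Fn Pr D :=
    { fn := fun g => if h : ∃ i, 1 ≤ i ∧ i ≤ n ∧ vf i = g then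
          fun _ => evalT J (Ts h.choose) else J.fn g
      pr := J.pr }
  have hf : ∀ g : Fn, FnInF g G → Jh.fn g = J.fn g := by
    intro g hg
    have : ¬ ∃ i, 1 ≤ i ∧ i ≤ n ∧ vf i = g := by
      rintro ⟨i, h1, h2, rfl⟩
      exact he.vf_fresh i h1 h2 hg
    exact dif_neg this
  have hp : ∀ p : Pr, PrInF p G → Jh.pr p = J.pr p := fun _ _ => rfl
  have hv : ∀ i, 1 ≤ i → i ≤ n → Jh.fn (vf i) [] = evalT Jh (Ts i) := by
    intro i h1 h2
    rw [evalT_agree G Jh J hf hp _ (he.ts_occurs i h1 h2)]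
    have hex : ∃ j, 1 ≤ j ∧ j ≤ n ∧ vf j = vf i := ⟨i, h1, h2, rfl⟩
    have e : Jh.fn (vf i) = fun _ => evalT J (Ts hex.choose) := dif_pos hex
    have hc := hex.choose_spec
    rw [e, he.vf_inj _ _ hc.1 hc.2.1 h1 h2 hc.2.2]
  have hs := step_eval G f k n Ts S vf hatS he Jh hv
  refine ⟨Jh, hf, hp, ?_, ?_⟩
  · intro T hT
    exact ⟨(hs _ (fordT_le n n Ts T fun _ _ h _ => h)).1 T, evalT_agree G Jh J hf hp T hT⟩
  · intro E hE
    exact ⟨(hs _ (fordF_le n Ts E)).2 E, evalF_agree G Jh J hf hp E hE⟩
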